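/- Let conditions A and B hold. Then the normalized first-rare-event step counts ν*_ε = p_ε ν_ε converge in distribution as ε → 0 to an exponential random variable with parameter 1: P(p_ε ν_ε > t) → e^{−t} for every t ≥ 0, for any family of initial distributions q̄_ε. -/

import Mathlib

open MeasureTheory Filter Set
open scoped Topology ENNReal

noncomputable section

/-- Condition B: there exists a ring chain of states `c 0, c 1, …, c N = c 0`
containing all states of the phase space, with
`liminf_{ε→0+} p ε (c (k-1)) (c k) > 0` for `k = 1, …, N`. -/
def CondB {m : ℕ} (p : ℝ → Fin m → Fin m → ℝ) : Prop :=
  ∃ N : ℕ, 0 < N ∧ ∃ c : ℕ → Fin m, c N = c 0 ∧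
    (∀ i : Fin m, ∃ k ≤ N, c k = i) ∧
    ∀ k < N, 0 < Filter.liminf (fun ε => p ε (c k) (c (k + 1))) (𝓝[>] (0 : ℝ))

/-- `π` is a stationary distribution of the transition matrix `p`. -/
def IsStationaryDist {m : ℕ} (p : Fin m → Fin m → ℝ) (π : Fin m → ℝ) : Prop :=
  (∀ i, 0 ≤ π i) ∧ (∑ i, π i = 1) ∧ ∀ j, π j = ∑ i, π i * p i j

/-- `p_{ε,i} = P_i(ζ_{ε,1} = 1)`, the probability of occurrence of the rare event during
one transition step, starting from state `i`. -/
def rareP {m : ℕ} {Ω : Type} [MeasurableSpace Ω]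
    (Pstart : ℝ → Fin m → Measure Ω) (ζ : ℝ → ℕ → Ω → Bool) (ε : ℝ) (i : Fin m) : ℝ :=
  (Pstart ε i {ω | ζ ε 1 ω = true}).toReal

/-- `p_ε = Σ_i π_{ε,i} p_{ε,i}`, the stationary average of the rare-event probabilities. -/
def avgRare {m : ℕ} {Ω : Type} [MeasurableSpace Ω]
    (Pstart : ℝ → Fin m → Measure Ω) (ζ : ℝ → ℕ → Ω → Bool) (π : ℝ → Fin m → ℝ)
    (ε : ℝ) : ℝ :=
  ∑ i, π ε i * rareP Pstart ζ ε i

/-- Iterated substochastic matrix applied to the constant function one. -/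
def survU {m : ℕ} (Q : Fin m → Fin m → ℝ) : ℕ → Fin m → ℝ
  | 0 => fun _ => 1
  | n + 1 => fun i => ∑ j, Q i j * survU Q n j

/-- Quantitative maximum principle. -/
lemma max_principle {m : ℕ} (P : Fin m → Fin m → ℝ) (hP0 : ∀ i j, 0 ≤ P i j)
    (hP1 : ∀ i, ∑ j, P i j = 1) (c : ℕ → Fin m) (N : ℕ) (a : ℝ) (ha : 0 < a)
    (hc : ∀ k, a ≤ P (c k) (c (k + 1)))
    (hr : ∀ i j, ∃ k l, l ≤ N ∧ c k = i ∧ c (k + l) = j)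
    (h : Fin m → ℝ) (δ : ℝ) (hδ : 0 ≤ δ) (hh : ∀ i, h i - ∑ j, P i j * h j ≤ δ) :
    ∀ i j, h i - h j ≤ N / a ^ N * δ := by
  intro i₀ j
  have : Nonempty (Fin m) := ⟨i₀⟩
  obtain ⟨i, hi⟩ := Finite.exists_max h
  have ha1 : a ≤ 1 := by
    refine (hc 0).trans ?_
    rw [← hP1 (c 0)]
    exact Finset.single_le_sum (f := fun j => P (c 0) j) (fun j _ => hP0 _ j) (Finset.mem_univ _)
  obtain ⟨k, l, hl, hk, hkl⟩ := hr i j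
  have key : ∀ l : ℕ, h i - h (c (k + l)) ≤ l / a ^ l * δ := by
    intro l
    induction l with
    | zero => simp [hk]
    | succ l ih =>
      set x := c (k + l) with hx
      set y := c (k + l + 1) with hy
      have e : ∑ j, P x j * (h i - h j) = h i - ∑ j, P x j * h j := by
        simp only [mul_sub, Finset.sum_sub_distrib, ← Finset.sum_mul, hP1, one_mul]
      have s : P x y * (h i - h y) ≤ ∑ j, P x j * (h i - h j) :=
        Finset.single_le_sum (f := fun j => P x j * (h i - h j))
          (fun j _ => mul_nonneg (hP0 _ j) (sub_nonneg.2 (hi j))) (Finset.mem_univ _)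
      have s2 : a * (h i - h y) ≤ P x y * (h i - h y) :=
        mul_le_mul_of_nonneg_right (hc _) (sub_nonneg.2 (hi y))
      have s3 := hh x
      have s4 : a * (h i - h y) ≤ δ + l / a ^ l * δ := by linarith
      have hal : a ^ l ≤ 1 := pow_le_one₀ ha.le ha1
      have hal0 : 0 < a ^ l := pow_pos ha l
      have s5 : δ ≤ δ / a ^ l := by
        rw [le_div_iff₀ hal0]; nlinarith
      have s6 : h i - h y ≤ (δ / a ^ l + l / a ^ l * δ) / a := by
        rw [le_div_iff₀ ha]; linarith
      calc h i - h (c (k + (l + 1))) = h i - h y := rfl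
        _ ≤ _ := s6
        _ = _ := by push_cast; field_simp; ring
  have h1 := key l
  rw [hkl] at h1
  have h2 : (l : ℝ) / a ^ l ≤ N / a ^ N := by
    apply div_le_div₀ (by positivity) (by exact_mod_cast hl) (by positivity)
    exact pow_le_pow_of_le_one ha.le ha1 hl
  have h3 := mul_le_mul_of_nonneg_right h2 hδ
  linarith [hi i₀]

lemma pi_lower {m : ℕ} (P : Fin m → Fin m → ℝ) (hP0 : ∀ i j, 0 ≤ P i j)
    (hP1 : ∀ i, ∑ j, P i j = 1) (c : ℕ → Fin m) (N : ℕ) (a : ℝ) (ha : 0 < a)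
    (hc : ∀ k, a ≤ P (c k) (c (k + 1)))
    (hr : ∀ i j, ∃ k l, l ≤ N ∧ c k = i ∧ c (k + l) = j)
    (π : Fin m → ℝ) (hπ : IsStationaryDist P π) (j : Fin m) : a ^ N / m ≤ π j := by
  have : Nonempty (Fin m) := ⟨j⟩
  obtain ⟨hπ0, hπ1, hπs⟩ := hπ
  obtain ⟨i, hi⟩ := Finite.exists_max π
  have ha1 : a ≤ 1 := by
    refine (hc 0).trans ?_
    rw [← hP1 (c 0)]
    exact Finset.single_le_sum (f := fun j => P (c 0) j) (fun j _ => hP0 _ j) (Finset.mem_univ _)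
  have hm : (0 : ℝ) < m := by exact_mod_cast j.pos
  have hi1 : 1 ≤ m * π i := by
    rw [← hπ1]
    calc ∑ k, π k ≤ ∑ _k : Fin m, π i := Finset.sum_le_sum (fun k _ => hi k)
      _ = _ := by simp
  obtain ⟨k, l, hl, hk, hkl⟩ := hr i j
  have key : ∀ l : ℕ, a ^ l * π i ≤ π (c (k + l)) := by
    intro l
    induction l with
    | zero => simp [hk]
    | succ l ih =>
      have s : π (c (k + l)) * P (c (k + l)) (c (k + l + 1)) ≤ π (c (k + l + 1)) := by
        conv_rhs => rw [hπs]
        exact Finset.single_le_sum (f := fun j => π j * P j (c (k + l + 1)))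
          (fun j _ => mul_nonneg (hπ0 j) (hP0 _ _)) (Finset.mem_univ _)
      have s2 := mul_le_mul_of_nonneg_left (hc (k + l)) (hπ0 (c (k + l)))
      have s3 := mul_le_mul_of_nonneg_right ih ha.le
      calc a ^ (l + 1) * π i = a ^ l * π i * a := by ring
        _ ≤ π (c (k + l + 1)) := by linarith
  have h1 := key l
  rw [hkl] at h1
  have h2 : a ^ N ≤ a ^ l := pow_le_pow_of_le_one ha.le ha1 hl
  rw [div_le_iff₀ hm]
  have h3 : 0 < a ^ N := pow_pos ha N
  calc a ^ N ≤ a ^ N * (m * π i) := by nlinarith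
    _ ≤ a ^ l * (m * π i) := by gcongr
    _ = (a ^ l * π i) * m := by ring
    _ ≤ _ := by gcongr

lemma poisson {m : ℕ} (P : Fin m → Fin m → ℝ) (hP0 : ∀ i j, 0 ≤ P i j)
    (hP1 : ∀ i, ∑ j, P i j = 1) (c : ℕ → Fin m) (N : ℕ) (a : ℝ) (ha : 0 < a)
    (hc : ∀ k, a ≤ P (c k) (c (k + 1)))
    (hr : ∀ i j, ∃ k l, l ≤ N ∧ c k = i ∧ c (k + l) = j)
    (π : Fin m → ℝ) (hπ : IsStationaryDist P π)
    (g : Fin m → ℝ) (hg : ∑ i, π i * g i = 0) (δ : ℝ) (hδ : ∀ i, |g i| ≤ δ) :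
    ∃ h : Fin m → ℝ, (∀ i, h i - ∑ j, P i j * h j = g i) ∧ ∀ i, |h i| ≤ N / a ^ N * δ := by
  have hδ0 : 0 ≤ δ := (abs_nonneg _).trans (hδ (c 0))
  obtain ⟨hπ0, hπ1, hπs⟩ := hπ
  have hπP : ∀ h : Fin m → ℝ, ∑ i, π i * (h i - ∑ j, P i j * h j) = 0 := by
    intro h
    simp only [mul_sub, Finset.sum_sub_distrib, Finset.mul_sum]
    rw [Finset.sum_comm, sub_eq_zero]
    refine Finset.sum_congr rfl (fun j _ => ?_)
    conv_lhs => rw [hπs j]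
    rw [Finset.sum_mul]
    exact Finset.sum_congr rfl (fun i _ => by ring)
  let T : (Fin m → ℝ) →ₗ[ℝ] (Fin m → ℝ) :=
    { toFun := fun h i => h i - ∑ j, P i j * h j + ∑ j, π j * h j
      map_add' := by
        intro x y; ext i
        simp only [Pi.add_apply, mul_add, Finset.sum_add_distrib]; ring
      map_smul' := by
        intro r x; ext i
        simp only [Pi.smul_apply, smul_eq_mul, RingHom.id_apply, mul_add, mul_sub, Finset.mul_sum]
        congr 1
        · congr 1
          exact Finset.sum_congr rfl (fun j _ => by ring)
        · exact Finset.sum_congr rfl (fun j _ => by ring) }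
  have hT : ∀ h i, T h i = h i - ∑ j, P i j * h j + ∑ j, π j * h j := fun _ _ => rfl
  have hπT : ∀ h, ∑ i, π i * T h i = ∑ j, π j * h j := by
    intro h
    simp only [hT]
    rw [Finset.sum_congr rfl (fun i _ => mul_add (π i) _ _), Finset.sum_add_distrib, hπP,
      ← Finset.sum_mul, hπ1]
    ring
  have hbd : ∀ h : Fin m → ℝ, ∑ j, π j * h j = 0 → ∀ C, (∀ i j, h i - h j ≤ C) →
      ∀ i, |h i| ≤ C := by
    intro h h0 C hC i
    have e1 : h i = ∑ j, π j * (h i - h j) := by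
      simp only [mul_sub, Finset.sum_sub_distrib, ← Finset.sum_mul, hπ1, h0]; ring
    have e2 : - h i = ∑ j, π j * (h j - h i) := by
      simp only [mul_sub, Finset.sum_sub_distrib, ← Finset.sum_mul, hπ1, h0]; ring
    have e3 : ∑ j, π j * C = C := by rw [← Finset.sum_mul, hπ1, one_mul]
    refine abs_le'.2 ⟨?_, ?_⟩
    · rw [e1, ← e3]
      exact Finset.sum_le_sum (fun j _ => mul_le_mul_of_nonneg_left (hC i j) (hπ0 j))
    · rw [e2, ← e3]
      exact Finset.sum_le_sum (fun j _ => mul_le_mul_of_nonneg_left (hC j i) (hπ0 j))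
  have hinj : Function.Injective T := by
    rw [← LinearMap.ker_eq_bot, LinearMap.ker_eq_bot']
    intro h h0
    have h1 : ∑ j, π j * h j = 0 := by rw [← hπT, h0]; simp
    have h2 : ∀ i, h i - ∑ j, P i j * h j ≤ 0 := by
      intro i
      have := congrFun h0 i
      rw [hT, h1] at this
      simp only [Pi.zero_apply] at this
      linarith
    have h3 := hbd h h1 _ (max_principle P hP0 hP1 c N a ha hc hr h 0 le_rfl h2)
    ext i
    have := h3 i
    rw [mul_zero] at this
    exact abs_nonpos_iff.1 this
  obtain ⟨h, hh⟩ := LinearMap.injective_iff_surjective.1 hinj g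
  have h1 : ∑ j, π j * h j = 0 := by rw [← hπT, hh, hg]
  have h2 : ∀ i, h i - ∑ j, P i j * h j = g i := by
    intro i
    rw [← hh, hT, h1, add_zero]
  refine ⟨h, h2, hbd h h1 _ (max_principle P hP0 hP1 c N a ha hc hr h δ hδ0 ?_)⟩
  intro i
  rw [h2]
  exact (le_abs_self _).trans (hδ i)

lemma surv_bounds {m : ℕ} (Q : Fin m → Fin m → ℝ) (hQ : ∀ i j, 0 ≤ Q i j)
    (f : Fin m → ℝ) (d x y : ℝ) (hx : 0 ≤ x) (hy : 0 ≤ y)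
    (hf1 : ∀ i, 1 - d ≤ f i) (hf2 : ∀ i, f i ≤ 1 + d) (hd0 : 0 ≤ d) (hd : d < 1)
    (hlo : ∀ i, x * f i ≤ ∑ j, Q i j * f j) (hup : ∀ i, ∑ j, Q i j * f j ≤ y * f i) (n : ℕ)
    (i : Fin m) :
    x ^ n * ((1 - d) / (1 + d)) ≤ survU Q n i ∧ survU Q n i ≤ y ^ n * ((1 + d) / (1 - d)) := by
  have hd1 : 0 < 1 - d := by linarith
  have hd2 : 0 < 1 + d := by linarith
  have key : ∀ n i, x ^ n * (f i / (1 + d)) ≤ survU Q n i ∧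
      survU Q n i ≤ y ^ n * (f i / (1 - d)) := by
    intro n
    induction n with
    | zero =>
      intro i
      simp only [survU, pow_zero, one_mul]
      exact ⟨(div_le_one hd2).2 (hf2 i), (one_le_div hd1).2 (hf1 i)⟩
    | succ n ih =>
      intro i
      simp only [survU]
      constructor
      · calc x ^ (n + 1) * (f i / (1 + d)) = x ^ n / (1 + d) * (x * f i) := by
              rw [pow_succ]; ring
          _ ≤ x ^ n / (1 + d) * ∑ j, Q i j * f j := by gcongr; exact hlo i
          _ = ∑ j, Q i j * (x ^ n * (f j / (1 + d))) := by
              rw [Finset.mul_sum]; exact Finset.sum_congr rfl (fun j _ => by ring)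
          _ ≤ _ := Finset.sum_le_sum (fun j _ => mul_le_mul_of_nonneg_left (ih j).1 (hQ i j))
      · calc ∑ j, Q i j * survU Q n j ≤ ∑ j, Q i j * (y ^ n * (f j / (1 - d))) :=
              Finset.sum_le_sum (fun j _ => mul_le_mul_of_nonneg_left (ih j).2 (hQ i j))
          _ = y ^ n / (1 - d) * ∑ j, Q i j * f j := by
              rw [Finset.mul_sum]; exact Finset.sum_congr rfl (fun j _ => by ring)
          _ ≤ y ^ n / (1 - d) * (y * f i) := by gcongr; exact hup i
          _ = _ := by rw [pow_succ]; ring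
  refine ⟨le_trans ?_ (key n i).1, (key n i).2.trans ?_⟩
  · gcongr; exact hf1 i
  · gcongr; exact hf2 i

/-- Deterministic two-sided bound. -/
lemma det_bounds {m : ℕ} (Q D : Fin m → Fin m → ℝ) (hQ : ∀ i j, 0 ≤ Q i j)
    (hD : ∀ i j, 0 ≤ D i j)
    (hP1 : ∀ i, ∑ j, (Q i j + D i j) = 1) (c : ℕ → Fin m) (N : ℕ) (a : ℝ) (ha : 0 < a)
    (hc : ∀ k, a ≤ Q (c k) (c (k + 1)) + D (c k) (c (k + 1)))
    (hr : ∀ i j, ∃ k l, l ≤ N ∧ c k = i ∧ c (k + l) = j)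
    (π : Fin m → ℝ) (hπ : IsStationaryDist (fun i j => Q i j + D i j) π)
    (r : Fin m → ℝ) (hrD : ∀ i, r i = ∑ j, D i j)
    (b K ρ d s pb : ℝ) (hb : b = a ^ N / m) (hK : K = N / a ^ N) (hρ : ρ = ∑ i, r i)
    (hd : d = K * ρ) (hs : s = 2 * d * (1 + 1 / b)) (hpb : pb = ∑ i, π i * r i)
    (hd1 : d ≤ 1 / 2) (hs1 : s ≤ 1) (hρ1 : ρ ≤ 1 / 4) (n : ℕ) (i : Fin m) :
    b * ρ ≤ pb ∧ pb ≤ ρ ∧ 0 ≤ d ∧ 0 ≤ s ∧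
    Real.exp (-((n * pb) * ((1 + s) / (1 - pb * (1 + s))))) * ((1 - d) / (1 + d))
      ≤ survU Q n i ∧
    survU Q n i ≤ Real.exp (-((n * pb) * (1 - s))) * ((1 + d) / (1 - d)) := by
  have hP0 : ∀ i j, 0 ≤ Q i j + D i j := fun i j => add_nonneg (hQ i j) (hD i j)
  have hπl := pi_lower _ hP0 hP1 c N a ha hc hr π hπ
  have hm : (0 : ℝ) < m := by exact_mod_cast i.pos
  have hb0 : 0 < b := by rw [hb]; positivity
  have hK0 : 0 ≤ K := by rw [hK]; positivity
  have hr0 : ∀ i, 0 ≤ r i := fun i => by rw [hrD]; exact Finset.sum_nonneg (fun j _ => hD i j)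
  have hrρ : ∀ i, r i ≤ ρ := fun i => by
    rw [hρ]; exact Finset.single_le_sum (fun j _ => hr0 j) (Finset.mem_univ _)
  have hρ0 : 0 ≤ ρ := (hr0 i).trans (hrρ i)
  have hd0 : 0 ≤ d := by rw [hd]; positivity
  have hs0 : 0 ≤ s := by rw [hs]; positivity
  have hbρ : b * ρ ≤ pb := by
    rw [hρ, hpb, Finset.mul_sum]
    exact Finset.sum_le_sum (fun j _ => mul_le_mul_of_nonneg_right (by rw [hb]; exact hπl j) (hr0 j))
  have hpbρ : pb ≤ ρ := by
    rw [hpb]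
    calc ∑ i, π i * r i ≤ ∑ i, π i * ρ :=
          Finset.sum_le_sum (fun j _ => mul_le_mul_of_nonneg_left (hrρ j) (hπ.1 j))
      _ = ρ := by rw [← Finset.sum_mul, hπ.2.1, one_mul]
  have hpb0 : 0 ≤ pb := le_trans (by positivity) hbρ
  obtain ⟨h, hh, hhb⟩ := poisson _ hP0 hP1 c N a ha hc hr π hπ (fun i => r i - pb)
    (by
      simp only [mul_sub, Finset.sum_sub_distrib, ← Finset.sum_mul, hπ.2.1, ← hpb]; ring) ρ
    (fun i => abs_le.2 ⟨by linarith [hr0 i], by linarith [hrρ i]⟩)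
  rw [← hK, ← hd] at hhb
  set f : Fin m → ℝ := fun i => 1 - h i with hf
  have hQf : ∀ i, ∑ j, Q i j * f j = (1 - pb) * f i + (∑ j, D i j * h j - pb * h i) := by
    intro i
    have e1 := hh i
    have e2 := hP1 i
    have e3 := hrD i
    simp only [add_mul, Finset.sum_add_distrib] at e1 e2
    simp only [hf, mul_sub, mul_one, Finset.sum_sub_distrib]
    linarith
  have hDh : ∀ i, |∑ j, D i j * h j| ≤ ρ * d := by
    intro i
    calc |∑ j, D i j * h j| ≤ ∑ j, |D i j * h j| := Finset.abs_sum_le_sum_abs _ _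
      _ ≤ ∑ j, D i j * d := Finset.sum_le_sum (fun j _ => by
          rw [abs_mul, abs_of_nonneg (hD i j)]
          exact mul_le_mul_of_nonneg_left (hhb j) (hD i j))
      _ = r i * d := by rw [← Finset.sum_mul, hrD]
      _ ≤ _ := mul_le_mul_of_nonneg_right (hrρ i) hd0
  have hρpb : ρ ≤ pb * (1 / b) := by
    rw [mul_one_div, le_div_iff₀ hb0]; linarith
  have hf1 : ∀ i, 1 - d ≤ f i := fun i => by simp only [hf]; linarith [(abs_le.1 (hhb i)).2]
  have hf2 : ∀ i, f i ≤ 1 + d := fun i => by simp only [hf]; linarith [(abs_le.1 (hhb i)).1]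
  have herr : ∀ i, |∑ j, D i j * h j - pb * h i| ≤ pb * s * f i := by
    intro i
    have t1 : |pb * h i| ≤ pb * d := by
      rw [abs_mul, abs_of_nonneg hpb0]; exact mul_le_mul_of_nonneg_left (hhb i) hpb0
    have t2 := abs_sub (∑ j, D i j * h j) (pb * h i)
    have t3 := hDh i
    have t4 : ρ * d ≤ pb * (1 / b) * d := mul_le_mul_of_nonneg_right hρpb hd0
    have t5 : pb * s * (1 / 2) ≤ pb * s * f i :=
      mul_le_mul_of_nonneg_left (by linarith [hf1 i]) (by positivity)
    have t6 : pb * s * (1 / 2) = pb * d + pb * (1 / b) * d := by rw [hs]; ring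
    linarith
  set x := pb * (1 + s) with hx
  have hx0 : 0 ≤ x := by positivity
  have hx1 : x ≤ 1 / 2 := by nlinarith
  have hy0 : 0 ≤ pb * (1 - s) := mul_nonneg hpb0 (by linarith)
  have hy1 : pb * (1 - s) ≤ x := by rw [hx]; nlinarith [mul_nonneg hpb0 hs0]
  obtain ⟨B1, B2⟩ := surv_bounds Q hQ f d (1 - x) (1 - pb * (1 - s)) (by linarith) (by linarith)
    hf1 hf2 hd0 (by linarith)
    (fun i => by rw [hQf, hx]; linarith [(abs_le.1 (herr i)).1])
    (fun i => by rw [hQf]; linarith [(abs_le.1 (herr i)).2]) n i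
  have hq1 : 0 ≤ (1 - d) / (1 + d) := div_nonneg (by linarith) (by linarith)
  have hq2 : 0 ≤ (1 + d) / (1 - d) := div_nonneg (by linarith) (by linarith)
  refine ⟨hbρ, hpbρ, hd0, hs0, le_trans (mul_le_mul_of_nonneg_right ?_ hq1) B1,
    B2.trans (mul_le_mul_of_nonneg_right ?_ hq2)⟩
  · have z1 : Real.exp (-(x / (1 - x))) ≤ 1 - x := by
      have hx2 : 0 < 1 - x := by linarith
      rw [Real.exp_neg, inv_le_comm₀ (Real.exp_pos _) hx2]
      have := Real.add_one_le_exp (x / (1 - x))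
      refine le_trans (le_of_eq ?_) this
      field_simp; ring
    calc _ = Real.exp (-(x / (1 - x))) ^ n := by
          rw [← Real.exp_nat_mul]; congr 1; rw [hx]; ring
      _ ≤ _ := pow_le_pow_left₀ (Real.exp_pos _).le z1 n
  · calc (1 - pb * (1 - s)) ^ n ≤ Real.exp (-(pb * (1 - s))) ^ n := by
          refine pow_le_pow_left₀ (by linarith) ?_ n
          linarith [Real.add_one_le_exp (-(pb * (1 - s)))]
      _ = _ := by rw [← Real.exp_nat_mul]; congr 1; ring

lemma R_nonneg {m : ℕ} {Ω : Type} [MeasurableSpace Ω] (η : ℕ → Ω → Fin m) (ζ : ℕ → Ω → Bool)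
    (μ : Fin m → Measure Ω) (R : Fin m → Fin m → Bool → ℝ)
    (hMRP : ∀ n : ℕ, ∀ I : ℕ → Fin m, ∀ Z : ℕ → Bool,
      μ (I 0) {ω | ∀ k ≤ n, (η k ω = I k ∧ (1 ≤ k → ζ k ω = Z k))}
        = ENNReal.ofReal (∏ k ∈ Finset.Icc 1 n, R (I (k - 1)) (I k) (Z k)))
    (c : ℕ → Fin m) (hc : ∀ k, 0 < R (c k) (c (k + 1)) false + R (c k) (c (k + 1)) true)
    (hr : ∀ i j, ∃ k l, c k = i ∧ c (k + l) = j) : ∀ i j z, 0 ≤ R i j z := by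
  have ext : ∀ (n : ℕ) (I : ℕ → Fin m) (Z : ℕ → Bool) (j : Fin m) (z : Bool),
      ∃ (I' : ℕ → Fin m) (Z' : ℕ → Bool), I' 0 = I 0 ∧ (∀ k ≤ n, I' k = I k ∧ Z' k = Z k) ∧ I' (n + 1) = j ∧
        ∏ k ∈ Finset.Icc 1 (n + 1), R (I' (k - 1)) (I' k) (Z' k) =
          (∏ k ∈ Finset.Icc 1 n, R (I (k - 1)) (I k) (Z k)) * R (I n) j z := by
    intro n I Z j z
    have hne : ∀ k ≤ n, k ≠ n + 1 := fun k hk => by omega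
    refine ⟨Function.update I (n + 1) j, Function.update Z (n + 1) z, ?_, ?_, ?_, ?_⟩
    · simp [Function.update]
    · intro k hk
      simp [Function.update_of_ne (hne k hk)]
    · simp
    · rw [Finset.prod_Icc_succ_top (by omega)]
      congr 1
      · refine Finset.prod_congr rfl (fun k hk => ?_)
        rw [Finset.mem_Icc] at hk
        rw [Function.update_of_ne (hne _ (by omega)), Function.update_of_ne (hne _ (by omega)),
          Function.update_of_ne (hne _ (by omega))]
      · rw [Nat.add_sub_cancel, Function.update_self, Function.update_self,
          Function.update_of_ne (hne _ le_rfl)]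
  have step : ∀ (n : ℕ) (I : ℕ → Fin m) (Z : ℕ → Bool),
      ∏ k ∈ Finset.Icc 1 n, R (I (k - 1)) (I k) (Z k) < 0 → ∀ j z, 0 ≤ R (I n) j z := by
    intro n I Z hneg j z
    obtain ⟨I', Z', h0, hk, -, hp⟩ := ext n I Z j z
    by_contra hlt
    push Not at hlt
    have h1 := hMRP (n + 1) I' Z'
    rw [hp] at h1
    have h2 : μ (I' 0) {ω | ∀ k ≤ n + 1, (η k ω = I' k ∧ (1 ≤ k → ζ k ω = Z' k))} = 0 := by
      refine measure_mono_null (t := {ω | ∀ k ≤ n, (η k ω = I k ∧ (1 ≤ k → ζ k ω = Z k))}) ?_ ?_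
      · intro ω hω k hkn
        have := hω k (by omega)
        rwa [(hk k hkn).1, (hk k hkn).2] at this
      · rw [h0, hMRP, ENNReal.ofReal_eq_zero]; exact hneg.le
    rw [h2] at h1
    have h3 := ENNReal.ofReal_eq_zero.1 h1.symm
    nlinarith [mul_pos_of_neg_of_neg hneg hlt]
  intro i j z
  by_contra hlt
  push Not at hlt
  let S : Fin m → Prop := fun x => ∃ (n : ℕ) (I : ℕ → Fin m) (Z : ℕ → Bool), I n = x ∧
    ∏ k ∈ Finset.Icc 1 n, R (I (k - 1)) (I k) (Z k) < 0
  have hSj : S j := by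
    obtain ⟨I', Z', h0, hk, hj, hp⟩ := ext 0 (fun _ => i) (fun _ => z) j z
    refine ⟨1, I', Z', hj, ?_⟩
    rw [hp]; simpa using hlt
  have hSs : ∀ k, S (c k) → S (c (k + 1)) := by
    rintro k ⟨n, I, Z, hIn, hneg⟩
    have : ∃ z, 0 < R (c k) (c (k + 1)) z := by
      by_contra! hcon
      linarith [hc k, hcon true, hcon false]
    obtain ⟨z, hz⟩ := this
    obtain ⟨I', Z', h0, hk, hj, hp⟩ := ext n I Z (c (k + 1)) z
    refine ⟨n + 1, I', Z', hj, ?_⟩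
    rw [hp, hIn]
    exact mul_neg_of_neg_of_pos hneg hz
  obtain ⟨k, l, hk, hl⟩ := hr j i
  have hSl : ∀ l, S (c (k + l)) := by
    intro l
    induction l with
    | zero => rw [add_zero, hk]; exact hSj
    | succ l ih => exact hSs _ ih
  obtain ⟨n, I, Z, hIn, hneg⟩ := hl ▸ hSl l
  have := step n I Z hneg j z
  rw [hIn] at this
  linarith

lemma start_ae {m : ℕ} {Ω : Type} [MeasurableSpace Ω] (η : ℕ → Ω → Fin m) (ζ : ℕ → Ω → Bool)
    (μ : Fin m → Measure Ω) (hprob : ∀ i, IsProbabilityMeasure (μ i))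
    (hη : ∀ n, Measurable (η n))
    (R : Fin m → Fin m → Bool → ℝ)
    (hMRP : ∀ n : ℕ, ∀ I : ℕ → Fin m, ∀ Z : ℕ → Bool,
      μ (I 0) {ω | ∀ k ≤ n, (η k ω = I k ∧ (1 ≤ k → ζ k ω = Z k))}
        = ENNReal.ofReal (∏ k ∈ Finset.Icc 1 n, R (I (k - 1)) (I k) (Z k))) (i : Fin m) :
    ∀ᵐ ω ∂(μ i), η 0 ω = i := by
  have h := hMRP 0 (fun _ => i) (fun _ => false)
  have hs : MeasurableSet {ω | η 0 ω = i} := hη 0 (measurableSet_singleton i)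
  have := hprob i
  refine (mem_ae_iff_prob_eq_one hs).2 ?_
  simpa using h

/-- Real valued partition over the next state. -/
lemma split_state {m : ℕ} {Ω : Type} [MeasurableSpace Ω] (μ : Measure Ω) [IsProbabilityMeasure μ]
    (X : Ω → Fin m) (hX : Measurable X) (A : Set Ω) (hA : MeasurableSet A) :
    μ.real A = ∑ j, μ.real (A ∩ {ω | X ω = j}) := by
  have hA' : A = ⋃ j ∈ (Finset.univ : Finset (Fin m)), (A ∩ {ω | X ω = j}) := by
    ext ω; simp
  conv_lhs => rw [hA']
  rw [measureReal_biUnion_finset]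
  · intro i _ j _ hij
    refine Set.disjoint_left.2 ?_
    rintro ω ⟨_, h1⟩ ⟨_, h2⟩
    exact hij (h1.symm.trans h2)
  · intro j _
    exact hA.inter (hX (measurableSet_singleton j))

lemma surv_prob {m : ℕ} {Ω : Type} [MeasurableSpace Ω] (η : ℕ → Ω → Fin m) (ζ : ℕ → Ω → Bool)
    (μ : Fin m → Measure Ω) (hprob : ∀ i, IsProbabilityMeasure (μ i))
    (hη : ∀ n, Measurable (η n)) (hζ : ∀ n, Measurable (ζ n))
    (R : Fin m → Fin m → Bool → ℝ) (hR : ∀ i j z, 0 ≤ R i j z)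
    (hMRP : ∀ n : ℕ, ∀ I : ℕ → Fin m, ∀ Z : ℕ → Bool,
      μ (I 0) {ω | ∀ k ≤ n, (η k ω = I k ∧ (1 ≤ k → ζ k ω = Z k))}
        = ENNReal.ofReal (∏ k ∈ Finset.Icc 1 n, R (I (k - 1)) (I k) (Z k))) (l : ℕ) (i : Fin m) :
    (μ i).real {ω | ∀ k, 1 ≤ k → k ≤ l → ζ k ω = false} =
      survU (fun i j => R i j false) l i := by
  have hmη : ∀ k j, MeasurableSet {ω | η k ω = j} := fun k j => hη k (measurableSet_singleton j)
  have hmζ : ∀ k j, MeasurableSet {ω | ζ k ω = j} := fun k j => hζ k (measurableSet_singleton j)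
  have key : ∀ (l n : ℕ) (I : ℕ → Fin m),
      (μ (I 0)).real {ω | (∀ k ≤ n, η k ω = I k) ∧ ∀ k, 1 ≤ k → k ≤ n + l → ζ k ω = false} =
        (∏ k ∈ Finset.Icc 1 n, R (I (k - 1)) (I k) false) *
          survU (fun i j => R i j false) l (I n) := by
    intro l
    induction l with
    | zero =>
      intro n I
      have h := hMRP n I (fun _ => false)
      simp only [survU, mul_one]
      rw [← ENNReal.toReal_ofReal (Finset.prod_nonneg (fun k _ => hR _ _ _)), ← h,
        Measure.real]
      congr 2
      ext ω
      simp only [Set.mem_ofPred_eq, add_zero]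
      exact ⟨fun h k hk => ⟨h.1 k hk, fun h1 => h.2 k h1 hk⟩,
        fun h => ⟨fun k hk => (h k hk).1, fun k h1 hk => (h k hk).2 h1⟩⟩
    | succ l ih =>
      intro n I
      have := hprob (I 0)
      rw [split_state (μ (I 0)) (η (n + 1)) (hη _)]
      · simp only [survU]
        rw [Finset.mul_sum]
        refine Finset.sum_congr rfl (fun j _ => ?_)
        have hne : ∀ k ≤ n, k ≠ n + 1 := fun k hk => by omega
        have h := ih (n + 1) (Function.update I (n + 1) j)
        rw [Function.update_self, Function.update_of_ne (hne 0 (by omega)),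
          Finset.prod_Icc_succ_top (by omega), Nat.add_sub_cancel, Function.update_self,
          Function.update_of_ne (hne n le_rfl)] at h
        have hp : ∏ k ∈ Finset.Icc 1 n, R (Function.update I (n + 1) j (k - 1))
            (Function.update I (n + 1) j k) false =
            ∏ k ∈ Finset.Icc 1 n, R (I (k - 1)) (I k) false := by
          refine Finset.prod_congr rfl (fun k hk => ?_)
          rw [Finset.mem_Icc] at hk
          rw [Function.update_of_ne (hne _ (by omega)), Function.update_of_ne (hne _ (by omega))]
        rw [hp, mul_assoc] at h
        rw [← h]
        congr 1
        ext ω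
        simp only [Set.mem_inter_iff, Set.mem_ofPred_eq]
        constructor
        · rintro ⟨⟨h1, h2⟩, h3⟩
          refine ⟨fun k hk => ?_, fun k hk1 hk2 => h2 k hk1 (by omega)⟩
          rcases Nat.lt_or_ge n k with hlt | hle
          · have : k = n + 1 := by omega
            subst this; rw [Function.update_self]; exact h3
          · rw [Function.update_of_ne (hne k hle)]; exact h1 k hle
        · rintro ⟨h1, h2⟩
          refine ⟨⟨fun k hk => ?_, fun k hk1 hk2 => h2 k hk1 (by omega)⟩, ?_⟩
          · have := h1 k (by omega)
            rwa [Function.update_of_ne (hne k hk)] at this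
          · have := h1 (n + 1) le_rfl
            rwa [Function.update_self] at this
      · have e : {ω | (∀ k ≤ n, η k ω = I k) ∧
            ∀ k, 1 ≤ k → k ≤ n + (l + 1) → ζ k ω = false} =
            (⋂ k, ⋂ (_ : k ≤ n), {ω | η k ω = I k}) ∩
              ⋂ k, ⋂ (_ : 1 ≤ k), ⋂ (_ : k ≤ n + (l + 1)), {ω | ζ k ω = false} := by
          ext ω; simp
        rw [e]
        exact (MeasurableSet.iInter fun k => MeasurableSet.iInter fun _ => hmη _ _).inter
          (MeasurableSet.iInter fun k => MeasurableSet.iInter fun _ =>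
            MeasurableSet.iInter fun _ => hmζ _ _)
  have h := key l 0 (fun _ => i)
  simp only [Finset.Icc_eq_empty_of_lt Nat.zero_lt_one, Finset.prod_empty, one_mul, zero_add] at h
  rw [← h]
  refine measureReal_congr ?_
  filter_upwards [start_ae η ζ μ hprob hη R hMRP i] with ω hω
  refine propext ⟨fun h => ⟨fun k hk => ?_, h⟩, fun h => h.2⟩
  have : k = 0 := by omega
  rw [this]; exact hω

lemma one_step {m : ℕ} {Ω : Type} [MeasurableSpace Ω] (η : ℕ → Ω → Fin m) (ζ : ℕ → Ω → Bool)
    (μ : Fin m → Measure Ω) (hprob : ∀ i, IsProbabilityMeasure (μ i))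
    (hη : ∀ n, Measurable (η n)) (hζ : ∀ n, Measurable (ζ n))
    (R : Fin m → Fin m → Bool → ℝ) (hR : ∀ i j z, 0 ≤ R i j z)
    (hMRP : ∀ n : ℕ, ∀ I : ℕ → Fin m, ∀ Z : ℕ → Bool,
      μ (I 0) {ω | ∀ k ≤ n, (η k ω = I k ∧ (1 ≤ k → ζ k ω = Z k))}
        = ENNReal.ofReal (∏ k ∈ Finset.Icc 1 n, R (I (k - 1)) (I k) (Z k))) (i : Fin m) :
    (∀ z, (μ i).real {ω | ζ 1 ω = z} = ∑ j, R i j z) ∧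
      ∑ j, (R i j false + R i j true) = 1 := by
  have hmζ : ∀ k j, MeasurableSet {ω | ζ k ω = j} := fun k j => hζ k (measurableSet_singleton j)
  have := hprob i
  have h1 : ∀ z, (μ i).real {ω | ζ 1 ω = z} = ∑ j, R i j z := by
    intro z
    rw [split_state (μ i) (η 1) (hη 1) _ (hmζ 1 z)]
    refine Finset.sum_congr rfl (fun j _ => ?_)
    have h := hMRP 1 (fun k => if k = 0 then i else j) (fun _ => z)
    simp only [Finset.Icc_self, Finset.prod_singleton, Nat.sub_self, if_true, one_ne_zero,
      if_false] at h
    rw [← ENNReal.toReal_ofReal (hR i j z), ← h, ← Measure.real]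
    refine measureReal_congr ?_
    filter_upwards [start_ae η ζ μ hprob hη R hMRP i] with ω hω
    refine propext ⟨fun h k hk => ?_, fun h => ?_⟩
    · obtain ⟨h2, h3⟩ := h
      rcases Nat.le_one_iff_eq_zero_or_eq_one.1 hk with rfl | rfl
      · exact ⟨by simpa using hω, fun h => absurd h (by omega)⟩
      · exact ⟨by simpa using h3, fun _ => h2⟩
    · have := h 1 le_rfl
      exact ⟨this.2 le_rfl, by simpa using this.1⟩
  refine ⟨h1, ?_⟩
  rw [Finset.sum_add_distrib, ← h1, ← h1]
  have hc : {ω | ζ 1 ω = true} = {ω | ζ 1 ω = false}ᶜ := by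
    ext ω; simp
  rw [hc, measureReal_add_measureReal_compl (hmζ 1 false)]
  simp

/-- Lemma 7: under conditions A and B, the normalized first-rare-event
step counts `ν*_ε = p_ε ν_ε` converge in distribution to an exponential random variable
with parameter 1, i.e. `P(p_ε ν_ε > t) → e^{−t}` for every `t ≥ 0`.  Here the event
`{p_ε ν_ε > t}` is the event that no rare event occurs among the steps `n ≥ 1` with
`p_ε n ≤ t`. -/
theorem stmt14 {m : ℕ} (hm : 0 < m) (ε₀ : ℝ) (hε₀ : 0 < ε₀)
    {Ω : Type} [MeasurableSpace Ω]
    (η : ℝ → ℕ → Ω → Fin m) (ζ : ℝ → ℕ → Ω → Bool)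
    (Pstart : ℝ → Fin m → Measure Ω)
    (hprob : ∀ ε i, IsProbabilityMeasure (Pstart ε i))
    (hmeas : ∀ ε n, Measurable (η ε n) ∧ Measurable (ζ ε n))
    -- Markov renewal structure with kernel R_{ε,ij}(ι)
    (R : ℝ → Fin m → Fin m → Bool → ℝ)
    (hMRP : ∀ ε ∈ Ioc (0:ℝ) ε₀, ∀ n : ℕ, ∀ I : ℕ → Fin m, ∀ Z : ℕ → Bool,
      Pstart ε (I 0) {ω | ∀ k ≤ n, (η ε k ω = I k ∧ (1 ≤ k → ζ ε k ω = Z k))}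
        = ENNReal.ofReal (∏ k ∈ Finset.Icc 1 n, R ε (I (k - 1)) (I k) (Z k)))
    -- embedded Markov chain and condition B
    (p : ℝ → Fin m → Fin m → ℝ)
    (hp : ∀ ε ∈ Ioc (0:ℝ) ε₀, ∀ i j, p ε i j = R ε i j false + R ε i j true)
    (hB : CondB p)
    (π : ℝ → Fin m → ℝ)
    (hπ : ∀ᶠ ε in 𝓝[>] (0:ℝ), IsStationaryDist (fun i j => p ε i j) (π ε))
    -- condition A
    (hA1 : ∀ ε ∈ Ioc (0:ℝ) ε₀, ∃ i, 0 < rareP Pstart ζ ε i)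
    (hA2 : ∀ i, Tendsto (fun ε => rareP Pstart ζ ε i) (𝓝[>] (0:ℝ)) (𝓝 0))
    -- arbitrary family of initial distributions
    (q : ℝ → Fin m → ℝ) (Pq : ℝ → Measure Ω)
    (hq : ∀ ε ∈ Ioc (0:ℝ) ε₀, (∀ i, 0 ≤ q ε i) ∧ ∑ i, q ε i = 1)
    (hmix : ∀ ε ∈ Ioc (0:ℝ) ε₀, Pq ε = ∑ i, ENNReal.ofReal (q ε i) • Pstart ε i) :
    ∀ t : ℝ, 0 ≤ t →
      Tendsto
        (fun ε => (Pq ε {ω | ∀ n : ℕ, 1 ≤ n →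
          avgRare Pstart ζ π ε * (n : ℝ) ≤ t → ζ ε n ω = false}).toReal)
        (𝓝[>] (0:ℝ)) (𝓝 (Real.exp (-t))) := by
  intro t ht
  obtain ⟨N, hN, c, hcN, hcs, hcl⟩ := hB
  have hmR : (0 : ℝ) < m := by exact_mod_cast hm
  -- uniform lower bound along the ring
  have hliminf : ∀ k, ∃ a : ℝ, 0 < a ∧
      (k < N → ∀ᶠ ε in 𝓝[>] (0 : ℝ), a ≤ p ε (c k) (c (k + 1))) := by
    intro k
    by_cases hk : k < N
    · have h := hcl k hk
      rw [Filter.liminf_eq] at h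
      by_contra! hcon
      refine absurd h (not_lt.2 (Real.sSup_nonpos ?_))
      intro x hx
      by_contra hx0
      push Not at hx0
      refine (hcon x hx0).2 ?_
      filter_upwards [show ∀ᶠ ε in 𝓝[>] (0 : ℝ), x ≤ p ε (c k) (c (k + 1)) from hx] with ε h
      exact not_lt.2 h
    · exact ⟨1, one_pos, fun h => absurd h hk⟩
  choose a' ha'0 ha' using hliminf
  obtain ⟨k₀, -, hk₀⟩ := Finset.exists_min_image (Finset.range N) a' ⟨0, Finset.mem_range.2 hN⟩
  set a := a' k₀ with ha_def
  have ha : 0 < a := ha'0 k₀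
  have hring : ∀ᶠ ε in 𝓝[>] (0 : ℝ), ∀ k ∈ Finset.range N, a ≤ p ε (c k) (c (k + 1)) := by
    rw [Filter.eventually_all_finset]
    intro k hk
    filter_upwards [ha' k (Finset.mem_range.1 hk)] with ε h
    exact (hk₀ k hk).trans h
  -- periodic extension of the ring
  set c' : ℕ → Fin m := fun k => c (k % N) with hc'
  have hc's : ∀ k, c' (k + 1) = c (k % N + 1) := by
    intro k
    have hlt := Nat.mod_lt k hN
    simp only [hc']
    rcases Nat.lt_or_ge (k % N + 1) N with h | h
    · congr 1
      rw [Nat.add_mod, Nat.mod_eq_of_lt (show 1 < N by omega), Nat.mod_eq_of_lt h]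
    · have e : k % N + 1 = N := by omega
      have : (k + 1) % N = 0 := by
        rw [← Nat.mod_add_mod, e, Nat.mod_self]
      rw [this, e, hcN]
  have hc'e : ∀ k ≤ N, c' k = c k := by
    intro k hk
    simp only [hc']
    rcases Nat.lt_or_ge k N with h | h
    · rw [Nat.mod_eq_of_lt h]
    · have : k = N := by omega
      rw [this, Nat.mod_self, hcN]
  have hr : ∀ i j, ∃ k l, l ≤ 2 * N ∧ c' k = i ∧ c' (k + l) = j := by
    intro i j
    obtain ⟨k1, hk1, h1⟩ := hcs i
    obtain ⟨k2, hk2, h2⟩ := hcs j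
    refine ⟨k1, N + k2 - k1, by omega, by rw [hc'e k1 hk1, h1], ?_⟩
    rw [show k1 + (N + k2 - k1) = N + k2 by omega, ← h2, ← hc'e k2 hk2]
    simp only [hc', Nat.add_mod_left]
  -- constants
  set b : ℝ := a ^ (2 * N) / m with hb
  set K : ℝ := (2 * N : ℕ) / a ^ (2 * N) with hK
  have hb0 : 0 < b := by rw [hb]; positivity
  set ρ : ℝ → ℝ := fun ε => ∑ i, rareP Pstart ζ ε i with hρ
  set d : ℝ → ℝ := fun ε => K * ρ ε with hd
  set s : ℝ → ℝ := fun ε => 2 * d ε * (1 + 1 / b) with hs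
  set pb : ℝ → ℝ := fun ε => avgRare Pstart ζ π ε with hpb
  set n : ℝ → ℕ := fun ε => ⌊t / pb ε⌋₊ with hn
  have hρt : Tendsto ρ (𝓝[>] (0 : ℝ)) (𝓝 0) := by
    have := tendsto_finsetSum (Finset.univ : Finset (Fin m)) (fun i _ => hA2 i)
    simpa using this
  have hdt : Tendsto d (𝓝[>] (0 : ℝ)) (𝓝 0) := by
    simpa using hρt.const_mul K
  have hst : Tendsto s (𝓝[>] (0 : ℝ)) (𝓝 0) := by
    have := (hdt.const_mul 2).mul_const (1 + 1 / b)
    rw [mul_zero, zero_mul] at this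
    exact this
  have hmain : ∀ᶠ ε in 𝓝[>] (0 : ℝ), 0 < pb ε ∧ pb ε ≤ ρ ε ∧
      Real.exp (-((n ε * pb ε) * ((1 + s ε) / (1 - pb ε * (1 + s ε))))) *
        ((1 - d ε) / (1 + d ε)) ≤
        (Pq ε {ω | ∀ n : ℕ, 1 ≤ n → pb ε * (n : ℝ) ≤ t → ζ ε n ω = false}).toReal ∧
      (Pq ε {ω | ∀ n : ℕ, 1 ≤ n → pb ε * (n : ℝ) ≤ t → ζ ε n ω = false}).toReal ≤
        Real.exp (-((n ε * pb ε) * (1 - s ε))) * ((1 + d ε) / (1 - d ε)) := by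
    filter_upwards [Ioc_mem_nhdsGT hε₀, hπ, hring, hdt.eventually_le_const (show (0:ℝ) < 1 / 2 by norm_num),
      hst.eventually_le_const (show (0:ℝ) < 1 by norm_num),
      hρt.eventually_le_const (show (0:ℝ) < 1 / 4 by norm_num)] with ε hε hπε hrε hd1 hs1 hρ1
    have hcε : ∀ k, a ≤ R ε (c' k) (c' (k + 1)) false + R ε (c' k) (c' (k + 1)) true := by
      intro k
      rw [← hp ε hε, hc's]
      exact hrε _ (Finset.mem_range.2 (Nat.mod_lt k hN))
    have hMε := hMRP ε hε
    have hR := R_nonneg (η ε) (ζ ε) (Pstart ε) (R ε) hMε c' (fun k => ha.trans_le (hcε k))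
      (fun i j => by obtain ⟨k, l, -, h⟩ := hr i j; exact ⟨k, l, h⟩)
    have h1 := one_step (η ε) (ζ ε) (Pstart ε) (hprob ε) (fun n => (hmeas ε n).1)
      (fun n => (hmeas ε n).2) (R ε) hR hMε
    have hπε' : IsStationaryDist (fun i j => R ε i j false + R ε i j true) (π ε) := by
      have : (fun i j => R ε i j false + R ε i j true) = fun i j => p ε i j := by
        funext i j; rw [hp ε hε]
      rw [this]; exact hπε
    have hdet := det_bounds (fun i j => R ε i j false) (fun i j => R ε i j true)
      (fun i j => hR i j false) (fun i j => hR i j true) (fun i => (h1 i).2) c' (2 * N) a ha hcε hr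
      (π ε) hπε' (rareP Pstart ζ ε) (fun i => (h1 i).1 true) b K (ρ ε) (d ε) (s ε) (pb ε)
      hb hK rfl rfl rfl rfl hd1 hs1 hρ1 (n ε)
    obtain ⟨i₀, hi₀⟩ := hA1 ε hε
    have hρ0 : 0 < ρ ε := hi₀.trans_le (Finset.single_le_sum (f := fun i => rareP Pstart ζ ε i)
      (fun i _ => ENNReal.toReal_nonneg) (Finset.mem_univ i₀))
    have hpb0 : 0 < pb ε := lt_of_lt_of_le (mul_pos hb0 hρ0) (hdet i₀).1
    have hset : {ω | ∀ n : ℕ, 1 ≤ n → pb ε * (n : ℝ) ≤ t → ζ ε n ω = false} =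
        {ω | ∀ k, 1 ≤ k → k ≤ n ε → ζ ε k ω = false} := by
      have hiff : ∀ k : ℕ, pb ε * (k : ℝ) ≤ t ↔ k ≤ n ε := by
        intro k
        simp only [hn]
        rw [Nat.le_floor_iff (div_nonneg ht hpb0.le), le_div_iff₀ hpb0, mul_comm]
      simp only [hiff]
    have hval : (Pq ε {ω | ∀ n : ℕ, 1 ≤ n → pb ε * (n : ℝ) ≤ t → ζ ε n ω = false}).toReal =
        ∑ i, q ε i * survU (fun i j => R ε i j false) (n ε) i := by
      rw [hset, hmix ε hε, Measure.finsetSum_apply, ENNReal.toReal_sum]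
      · refine Finset.sum_congr rfl (fun i _ => ?_)
        rw [← surv_prob (η ε) (ζ ε) (Pstart ε) (hprob ε) (fun n => (hmeas ε n).1)
          (fun n => (hmeas ε n).2) (R ε) hR hMε (n ε) i]
        rw [Measure.smul_apply, smul_eq_mul, ENNReal.toReal_mul,
          ENNReal.toReal_ofReal ((hq ε hε).1 i)]
        rfl
      · intro i _
        have := hprob ε i
        rw [Measure.smul_apply, smul_eq_mul]
        exact ENNReal.mul_ne_top ENNReal.ofReal_ne_top (measure_ne_top _ _)
    obtain ⟨hq0, hq1⟩ := hq ε hε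
    refine ⟨hpb0, (hdet i₀).2.1, ?_, ?_⟩
    · rw [hval]
      have hw : ∀ x : ℝ, x = ∑ i, q ε i * x := fun x => by rw [← Finset.sum_mul, hq1, one_mul]
      refine (hw _).trans_le ?_
      exact Finset.sum_le_sum (fun i _ =>
        mul_le_mul_of_nonneg_left (hdet i).2.2.2.2.1 (hq0 i))
    · rw [hval]
      have hw : ∀ x : ℝ, ∑ i, q ε i * x = x := fun x => by rw [← Finset.sum_mul, hq1, one_mul]
      refine le_trans ?_ (hw _).le
      exact Finset.sum_le_sum (fun i _ =>
        mul_le_mul_of_nonneg_left (hdet i).2.2.2.2.2 (hq0 i))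
  have hpbt : Tendsto pb (𝓝[>] (0 : ℝ)) (𝓝 0) :=
    tendsto_of_tendsto_of_tendsto_of_le_of_le' tendsto_const_nhds hρt
      (hmain.mono fun ε h => h.1.le) (hmain.mono fun ε h => h.2.1)
  have hnt : Tendsto (fun ε => (n ε : ℝ) * pb ε) (𝓝[>] (0 : ℝ)) (𝓝 t) := by
    have h1 : Tendsto (fun ε => t - pb ε) (𝓝[>] (0 : ℝ)) (𝓝 t) := by
      simpa using hpbt.const_sub t
    refine tendsto_of_tendsto_of_tendsto_of_le_of_le' h1 tendsto_const_nhds ?_ ?_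
    · filter_upwards [hmain] with ε h
      have h2 := Nat.lt_floor_add_one (t / pb ε)
      rw [div_lt_iff₀ h.1] at h2
      simp only [hn]
      linarith
    · filter_upwards [hmain] with ε h
      have h2 := Nat.floor_le (div_nonneg ht h.1.le)
      rwa [le_div_iff₀ h.1] at h2
  have h1d : Tendsto (fun ε => (1 - d ε) / (1 + d ε)) (𝓝[>] (0 : ℝ)) (𝓝 1) := by
    have := (hdt.const_sub 1).div (hdt.const_add 1) (by norm_num)
    simpa [Pi.div_def] using this
  have h2d : Tendsto (fun ε => (1 + d ε) / (1 - d ε)) (𝓝[>] (0 : ℝ)) (𝓝 1) := by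
    have := (hdt.const_add 1).div (hdt.const_sub 1) (by norm_num)
    simpa [Pi.div_def] using this
  have h1s : Tendsto (fun ε => (1 + s ε) / (1 - pb ε * (1 + s ε))) (𝓝[>] (0 : ℝ)) (𝓝 1) := by
    have := (hst.const_add 1).div ((hpbt.mul (hst.const_add 1)).const_sub 1) (by norm_num)
    simpa [Pi.div_def] using this
  have h2s : Tendsto (fun ε => 1 - s ε) (𝓝[>] (0 : ℝ)) (𝓝 1) := by
    simpa using hst.const_sub 1
  have hlo := ((Real.continuous_exp.tendsto _).comp (hnt.mul h1s).neg).mul h1d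
  have hup := ((Real.continuous_exp.tendsto _).comp (hnt.mul h2s).neg).mul h2d
  rw [mul_one, mul_one] at hlo hup
  exact tendsto_of_tendsto_of_tendsto_of_le_of_le' hlo hup
    (hmain.mono fun ε h => h.2.2.1) (hmain.mono fun ε h => h.2.2.2)
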